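/- Let p ≡ 2 (mod 3) be a prime and let a, b be integers with p ∤ ab. Then R(C) for C(x,y) = a x^3 + b y^3 is dense in Q_p. -/

import Mathlib

theorem cube_root_aux (p : ℕ) [Fact p.Prime] (hp : p % 3 = 2) (u : ℤ_[p]) (hu : IsUnit u) :
    ∃ x : ℤ_[p], x ^ 3 = u := by
  obtain ⟨m, hm⟩ : ∃ m, p = 3 * m + 2 := ⟨p / 3, by omega⟩
  have hpp : p.Prime := Fact.out
  have hun : ‖u‖ = 1 := PadicInt.isUnit_iff.1 hu
  have h3 : ‖(3 : ℤ_[p])‖ = 1 := by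
    have := (PadicInt.norm_natCast_eq_one_iff (p := p) (n := 3)).2 (by
      rw [Nat.coprime_primes hpp Nat.prime_three]
      rintro rfl
      omega)
    simpa using this
  have h1 : ‖(u ^ (2 * m + 1)) ^ 3 - u‖ < 1 := by
    rw [← PadicInt.mem_nonunits, ← IsLocalRing.mem_maximalIdeal, ← PadicInt.ker_toZMod,
      RingHom.mem_ker]
    have hz : PadicInt.toZMod u ≠ 0 := (hu.map PadicInt.toZMod).ne_zero
    have hf := ZMod.pow_card_sub_one_eq_one hz
    have he : (2 * m + 1) * 3 = (p - 1) * 2 + 1 := by omega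
    rw [map_sub, ← pow_mul, map_pow, he, pow_succ, pow_mul, hf]
    simp
  have hd : ‖(Polynomial.X ^ 3 - Polynomial.C u : Polynomial ℤ_[p]).derivative.aeval
      (u ^ (2 * m + 1))‖ = 1 := by
    simp only [Polynomial.derivative_sub, Polynomial.derivative_X_pow, Polynomial.derivative_C]
    simp [hun]
    norm_num [h3]
  obtain ⟨z, hz, -⟩ := hensels_lemma (p := p) (R := ℤ_[p])
    (F := Polynomial.X ^ 3 - Polynomial.C u) (a := u ^ (2 * m + 1)) (by
      rw [hd]
      simpa using h1)
  exact ⟨z, by simpa [sub_eq_zero] using hz⟩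

theorem cubic_repr_aux (p : ℕ) [Fact p.Prime] (hp : p % 3 = 2) (a b : ℤ)
    (ha : ¬ (p : ℤ) ∣ a) (hb : ¬ (p : ℤ) ∣ b) (c : ℤ_[p]) :
    ∃ x y : ℤ_[p], (a : ℤ_[p]) * x ^ 3 + b * y ^ 3 = c := by
  have key : ∀ k : ℤ, ¬ (p : ℤ) ∣ k → IsUnit (k : ℤ_[p]) := by
    intro k hk
    by_contra h
    exact hk ((PadicInt.norm_int_lt_one_iff_dvd k).1 (PadicInt.not_isUnit_iff.1 h))
  obtain ⟨a', ha'⟩ := (key a ha).exists_right_inv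
  have ha'u : IsUnit a' := .of_mul_eq_one_right _ ha'
  by_cases hc : IsUnit c
  · obtain ⟨x, hx⟩ := cube_root_aux p hp (a' * c) (ha'u.mul hc)
    exact ⟨x, 0, by rw [hx]; linear_combination c * ha'⟩
  · have hcb : IsUnit (c - b) := by
      by_contra h
      have := PadicInt.norm_lt_one_add (PadicInt.not_isUnit_iff.1 hc)
        (by rw [norm_neg]; exact PadicInt.not_isUnit_iff.1 h : ‖-(c - (b : ℤ_[p]))‖ < 1)
      rw [← PadicInt.not_isUnit_iff] at this
      apply this
      convert key b hb using 1
      ring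
    obtain ⟨x, hx⟩ := cube_root_aux p hp (a' * (c - b)) (ha'u.mul hcb)
    exact ⟨x, 1, by rw [hx]; linear_combination (c - b) * ha'⟩

/-- For a prime `p ≡ 2 (mod 3)` with `p ∤ ab`, the ratio set of
`C(x,y) = a x^3 + b y^3` is dense in `ℚ_p`. -/
theorem stmt_18 (p : ℕ) [Fact p.Prime] (hp : p % 3 = 2) (a b : ℤ)
    (ha : ¬ (p : ℤ) ∣ a) (hb : ¬ (p : ℤ) ∣ b) :
    Dense {q : ℚ_[p] | ∃ x y z w : ℤ, a * z ^ 3 + b * w ^ 3 ≠ 0 ∧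
      q = ((a * x ^ 3 + b * y ^ 3 : ℤ) : ℚ_[p]) / ((a * z ^ 3 + b * w ^ 3 : ℤ) : ℚ_[p])} := by
  intro t
  obtain ⟨c, d, hd, rfl⟩ := IsFractionRing.div_surjective (A := ℤ_[p]) t
  have hd0 : d ≠ 0 := nonZeroDivisors.ne_zero hd
  obtain ⟨x, y, rfl⟩ := cubic_repr_aux p hp a b ha hb c
  obtain ⟨z, w, rfl⟩ := cubic_repr_aux p hp a b ha hb d
  let N : (ℤ_[p] × ℤ_[p]) × (ℤ_[p] × ℤ_[p]) → ℚ_[p] :=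
    fun v => (a : ℚ_[p]) * (v.1.1 : ℚ_[p]) ^ 3 + b * (v.1.2 : ℚ_[p]) ^ 3
  let D : (ℤ_[p] × ℤ_[p]) × (ℤ_[p] × ℤ_[p]) → ℚ_[p] :=
    fun v => (a : ℚ_[p]) * (v.2.1 : ℚ_[p]) ^ 3 + b * (v.2.2 : ℚ_[p]) ^ 3
  have hcoe : Continuous ((↑) : ℤ_[p] → ℚ_[p]) := continuous_subtype_val
  have hN : Continuous N := by fun_prop
  have hD : Continuous D := by fun_prop
  have hD0 : D ((x, y), (z, w)) ≠ 0 := by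
    have := (PadicInt.coe_ne_zero (p := p)).2 hd0
    simpa [D] using this
  have hF : ContinuousAt (fun v => N v / D v) ((x, y), (z, w)) :=
    hN.continuousAt.div hD.continuousAt hD0
  have hdense : DenseRange (Prod.map (Prod.map ((↑) : ℤ → ℤ_[p]) ((↑) : ℤ → ℤ_[p]))
      (Prod.map ((↑) : ℤ → ℤ_[p]) ((↑) : ℤ → ℤ_[p]))) :=
    (PadicInt.denseRange_intCast.prodMap PadicInt.denseRange_intCast).prodMap
      (PadicInt.denseRange_intCast.prodMap PadicInt.denseRange_intCast)
  rw [mem_closure_iff_nhds]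
  intro U hU
  have hU' : U ∈ nhds (N ((x, y), (z, w)) / D ((x, y), (z, w))) := by
    simpa [N, D] using hU
  have hev := (hF.eventually_mem hU').and (hD.continuousAt.eventually_ne hD0)
  obtain ⟨v, hv, ⟨⟨⟨x', y'⟩, ⟨z', w'⟩⟩, rfl⟩⟩ := mem_closure_iff_nhds.1 (hdense ((x, y), (z, w))) _ hev
  refine ⟨_, hv.1, x', y', z', w', ?_, ?_⟩
  · intro h
    apply hv.2
    have : ((a * z' ^ 3 + b * w' ^ 3 : ℤ) : ℚ_[p]) = 0 := by rw [h]; simp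
    simpa [D] using this
  · simp [N, D]
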